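/- arXiv:1411.0251 — 2 statements merged into one kernel-verified Lean document; each statement's English description precedes it below -/
import Mathlib

section
/- Let A ∈ ℝ^{d×d} be symmetric positive semidefinite and let u(y) = exp(−⟨y, A y⟩) for y ∈ ℝ^d. Then the Gabor wave front set of u equals WF(u) = ( Ker A \ {0} ) × {0} ⊆ ℝ^{2d} \ {0}, where Ker A = { x ∈ ℝ^d : A x = 0 }. -/
open MeasureTheory Matrix

namespace Stmt17

/-- Gaussian-window short-time Fourier transform of `u : ℝ^d → ℂ`:
`Vu(x,ξ) = ∫ u(y) e^{−i⟨y,ξ⟩} e^{−|y−x|²} dy`. -/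
noncomputable def STFT (d : ℕ) (u : (Fin d → ℝ) → ℂ) (x ξ : Fin d → ℝ) : ℂ :=
  ∫ y : Fin d → ℝ, u y * Complex.exp (-(Complex.I) * ((∑ j, y j * ξ j : ℝ) : ℂ))
    * Complex.exp (-((∑ j, (y j - x j) ^ 2 : ℝ) : ℂ))

/-- An open cone in `ℝ^{2d} \ {0}`. -/
def IsOpenCone (d : ℕ) (Γ : Set ((Fin d → ℝ) × (Fin d → ℝ))) : Prop :=
  IsOpen Γ ∧ (0 : (Fin d → ℝ) × (Fin d → ℝ)) ∉ Γ ∧ ∀ z ∈ Γ, ∀ r : ℝ, 0 < r → r • z ∈ Γ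

/-- The Gabor wave front set of `u : ℝ^d → ℂ`: the set of `z₀ ∈ ℝ^{2d} \ {0}` such that
there is no open cone containing `z₀` on which `Vu` decays faster than any power of
`(1+|z|²)^{1/2}`, where `|z|` is the Euclidean norm. -/
def gaborWF (d : ℕ) (u : (Fin d → ℝ) → ℂ) : Set ((Fin d → ℝ) × (Fin d → ℝ)) :=
  {z | z ≠ 0 ∧ ¬ ∃ Γ : Set ((Fin d → ℝ) × (Fin d → ℝ)), IsOpenCone d Γ ∧ z ∈ Γ ∧
    ∀ N : ℕ, ∃ M : ℝ, ∀ w ∈ Γ,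
      (1 + (∑ j, w.1 j ^ 2) + (∑ j, w.2 j ^ 2)) ^ ((N : ℝ) / 2)
        * ‖STFT d u w.1 w.2‖ ≤ M}

open scoped MatrixOrder in
lemma exR {d : ℕ} (B : Matrix (Fin d) (Fin d) ℝ) (hB : B.PosDef) :
    ∃ R : Matrix (Fin d) (Fin d) ℝ, Rᵀ * B * R = 1 ∧ R.det ≠ 0 := by
  obtain ⟨P, rfl⟩ := CStarAlgebra.nonneg_iff_eq_star_mul_self.mp hB.posSemidef.nonneg
  have hd := hB.det_pos
  rw [star_eq_conjTranspose, conjTranspose_eq_transpose_of_trivial] at *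
  have hP : P.det ≠ 0 := by
    intro h; simp [h] at hd
  have hu : IsUnit P.det := hP.isUnit
  refine ⟨P⁻¹, ?_, ?_⟩
  · rw [transpose_nonsing_inv, ← Matrix.mul_assoc, Matrix.nonsing_inv_mul _ (by simpa using hu), Matrix.one_mul, Matrix.mul_nonsing_inv _ hu]
  · rw [det_nonsing_inv]; simp [hP]

open Complex in
lemma int_formula {d : ℕ} (R : Matrix (Fin d) (Fin d) ℝ) (hR : R.det ≠ 0) (f : (Fin d → ℝ) → ℂ) :
   ∫ y, f y = ((|R.det| : ℝ) : ℂ) * ∫ s, f (R *ᵥ s) := by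
  have h := Real.map_matrix_volume_pi_eq_smul_volume_pi hR
  have he : MeasurableEmbedding (toLin' R) := by
    have := (LinearEquiv.toContinuousLinearEquiv (LinearEquiv.ofIsUnitDet (f := toLin' R) (v := Pi.basisFun ℝ (Fin d)) (v' := Pi.basisFun ℝ (Fin d)) (by
      rw [← toLin_eq_toLin', LinearMap.toMatrix_toLin]; exact hR.isUnit))).toHomeomorph.measurableEmbedding
    exact this
  have h2 := he.integral_map (μ := volume) f
  rw [h, integral_smul_measure] at h2
  simp only [toLin'_apply] at h2
  rw [← h2, ENNReal.toReal_ofReal (abs_nonneg _), abs_inv, Complex.real_smul, ← mul_assoc, ← Complex.ofReal_mul, mul_inv_cancel₀ (by simpa using hR)]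
  simp

lemma quad_id {d : ℕ} (A R : Matrix (Fin d) (Fin d) ℝ) (hR : Rᵀ * (1 + A) * R = 1)
    (x s : Fin d → ℝ) :
    -((R *ᵥ s) ⬝ᵥ (A *ᵥ (R *ᵥ s))) + -((R *ᵥ s - x) ⬝ᵥ (R *ᵥ s - x))
      = -(s ⬝ᵥ s) + 2 * ((Rᵀ *ᵥ x) ⬝ᵥ s) - x ⬝ᵥ x := by
  have h1 : (R *ᵥ s) ⬝ᵥ (R *ᵥ s) + (R *ᵥ s) ⬝ᵥ (A *ᵥ (R *ᵥ s)) = s ⬝ᵥ s := by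
    have : s ⬝ᵥ ((Rᵀ * (1 + A) * R) *ᵥ s) = s ⬝ᵥ s := by rw [hR, one_mulVec]
    rw [← this, ← dotProduct_add]
    have e : (R *ᵥ s) + (A *ᵥ (R *ᵥ s)) = (1 + A) *ᵥ (R *ᵥ s) := by
      rw [add_mulVec, one_mulVec]
    rw [e, ← mulVec_mulVec, ← mulVec_mulVec, dotProduct_mulVec s Rᵀ, vecMul_transpose]
  have h2 : (Rᵀ *ᵥ x) ⬝ᵥ s = x ⬝ᵥ (R *ᵥ s) := by
    rw [dotProduct_mulVec, mulVec_transpose]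
  rw [h2, sub_dotProduct, dotProduct_sub, dotProduct_sub, dotProduct_comm (R *ᵥ s) x, ← h1]
  ring

lemma stft_norm {d : ℕ} (A R : Matrix (Fin d) (Fin d) ℝ) (hR : Rᵀ * (1 + A) * R = 1)
    (hdet : R.det ≠ 0) (x ξ : Fin d → ℝ) :
    ‖STFT d (fun y => (Real.exp (-(∑ j, y j * A.mulVec y j)) : ℂ)) x ξ‖
      = |R.det| * ‖(Real.pi : ℂ) ^ ((d : ℂ) / 2)‖ *
        Real.exp (-(x ⬝ᵥ x - (Rᵀ *ᵥ x) ⬝ᵥ (Rᵀ *ᵥ x) + (Rᵀ *ᵥ ξ) ⬝ᵥ (Rᵀ *ᵥ ξ) / 4)) := by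
  unfold STFT
  rw [int_formula R hdet]
  have key : ∀ s : Fin d → ℝ,
      ((Real.exp (-(∑ j, (R *ᵥ s) j * A.mulVec (R *ᵥ s) j)) : ℝ) : ℂ)
      * Complex.exp (-(Complex.I) * ((∑ j, (R *ᵥ s) j * ξ j : ℝ) : ℂ))
      * Complex.exp (-((∑ j, ((R *ᵥ s) j - x j) ^ 2 : ℝ) : ℂ))
      = Complex.exp (-((x ⬝ᵥ x : ℝ) : ℂ)) * Complex.exp (-1 * ∑ i, (s i : ℂ) ^ 2 +
        ∑ i, (2 * ((Rᵀ *ᵥ x) i : ℂ) - Complex.I * ((Rᵀ *ᵥ ξ) i : ℂ)) * (s i : ℂ)) := by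
    intro s
    have q := quad_id A R hR x s
    have h2 : ∑ j, (R *ᵥ s) j * ξ j = (Rᵀ *ᵥ ξ) ⬝ᵥ s := by
      change (R *ᵥ s) ⬝ᵥ ξ = _
      rw [dotProduct_comm, dotProduct_mulVec, mulVec_transpose]
    have h3 : ∑ j, ((R *ᵥ s) j - x j) ^ 2 = (R *ᵥ s - x) ⬝ᵥ (R *ᵥ s - x) := by
      simp [dotProduct, sq]
    rw [h2, h3, Complex.ofReal_exp, ← Complex.exp_add, ← Complex.exp_add, ← Complex.exp_add]
    congr 1
    have q' : ((-((R *ᵥ s) ⬝ᵥ (A *ᵥ (R *ᵥ s))) : ℝ) : ℂ)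
        + -(((R *ᵥ s - x) ⬝ᵥ (R *ᵥ s - x) : ℝ) : ℂ)
        = -((s ⬝ᵥ s : ℝ) : ℂ) + 2 * (((Rᵀ *ᵥ x) ⬝ᵥ s : ℝ) : ℂ) - ((x ⬝ᵥ x : ℝ) : ℂ) := by
      exact_mod_cast q
    have e1 : ∑ i, (s i : ℂ) ^ 2 = ((s ⬝ᵥ s : ℝ) : ℂ) := by
      simp [dotProduct, sq]
    have e2 : ∑ i, (2 * ((Rᵀ *ᵥ x) i : ℂ) - Complex.I * ((Rᵀ *ᵥ ξ) i : ℂ)) * (s i : ℂ)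
        = 2 * (((Rᵀ *ᵥ x) ⬝ᵥ s : ℝ) : ℂ) - Complex.I * (((Rᵀ *ᵥ ξ) ⬝ᵥ s : ℝ) : ℂ) := by
      simp only [dotProduct, Complex.ofReal_sum, Complex.ofReal_mul, Finset.mul_sum,
        ← Finset.sum_sub_distrib]
      exact Finset.sum_congr rfl fun i _ => by ring
    rw [e1, e2]
    change ((-((R *ᵥ s) ⬝ᵥ (A *ᵥ (R *ᵥ s))) : ℝ) : ℂ) + _ + _ = _
    linear_combination q'
  simp only [key]
  rw [integral_const_mul, GaussianFourier.integral_cexp_neg_mul_sum_add (by simp)]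
  simp only [norm_mul, Complex.norm_exp, Complex.norm_real, Real.norm_eq_abs, abs_abs,
    Fintype.card_fin, div_one, mul_one]
  have e3 : ((∑ i, (2 * ((Rᵀ *ᵥ x) i : ℂ) - Complex.I * ((Rᵀ *ᵥ ξ) i : ℂ)) ^ 2) / 4).re
      = (Rᵀ *ᵥ x) ⬝ᵥ (Rᵀ *ᵥ x) - (Rᵀ *ᵥ ξ) ⬝ᵥ (Rᵀ *ᵥ ξ) / 4 := by
    have : (∑ i, (2 * ((Rᵀ *ᵥ x) i : ℂ) - Complex.I * ((Rᵀ *ᵥ ξ) i : ℂ)) ^ 2) / 4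
        = (((Rᵀ *ᵥ x) ⬝ᵥ (Rᵀ *ᵥ x) - (Rᵀ *ᵥ ξ) ⬝ᵥ (Rᵀ *ᵥ ξ) / 4 : ℝ) : ℂ)
          + ((-((Rᵀ *ᵥ x) ⬝ᵥ (Rᵀ *ᵥ ξ)) : ℝ) : ℂ) * Complex.I := by
      simp only [dotProduct, Complex.ofReal_sum, Complex.ofReal_mul, Complex.ofReal_sub,
        Complex.ofReal_div, Complex.ofReal_neg, Finset.sum_div, ← Finset.sum_neg_distrib,
        Finset.sum_mul, ← Finset.sum_sub_distrib, ← Finset.sum_add_distrib]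
      refine Finset.sum_congr rfl fun i _ => ?_
      push_cast
      linear_combination ((Rᵀ *ᵥ ξ) i : ℂ) ^ 2 / 4 * Complex.I_sq
    rw [this]
    simp
  rw [e3]
  have e4 : (-((x ⬝ᵥ x : ℝ) : ℂ)).re = -(x ⬝ᵥ x) := by simp
  rw [e4, neg_add, neg_sub, sub_eq_add_neg ((Rᵀ *ᵥ x) ⬝ᵥ (Rᵀ *ᵥ x)),
    sub_eq_add_neg ((Rᵀ *ᵥ x) ⬝ᵥ (Rᵀ *ᵥ x)), Real.exp_add, Real.exp_add, Real.exp_add]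
  ring

lemma q_id {d : ℕ} (A R : Matrix (Fin d) (Fin d) ℝ) (hA : A.IsSymm)
    (hR : Rᵀ * (1 + A) * R = 1) (x : Fin d → ℝ) :
    ∃ m : Fin d → ℝ, x = m + A *ᵥ m ∧
      x ⬝ᵥ x - (Rᵀ *ᵥ x) ⬝ᵥ (Rᵀ *ᵥ x) = m ⬝ᵥ (A *ᵥ m) + (A *ᵥ m) ⬝ᵥ (A *ᵥ m) := by
  refine ⟨R *ᵥ (Rᵀ *ᵥ x), ?_⟩
  have h1 : (1 + A) * R * Rᵀ = 1 := by
    rw [Matrix.mul_assoc] at hR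
    exact mul_eq_one_comm.mp hR
  have h2 : x = R *ᵥ (Rᵀ *ᵥ x) + A *ᵥ (R *ᵥ (Rᵀ *ᵥ x)) := by
    have : ((1 + A) * R * Rᵀ) *ᵥ x = x := by rw [h1, one_mulVec]
    rw [← mulVec_mulVec, ← mulVec_mulVec, add_mulVec, one_mulVec] at this
    exact this.symm
  refine ⟨h2, ?_⟩
  have h3 : (Rᵀ *ᵥ x) ⬝ᵥ (Rᵀ *ᵥ x) = x ⬝ᵥ (R *ᵥ (Rᵀ *ᵥ x)) := by
    rw [dotProduct_mulVec x R, mulVec_transpose]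
  rw [h3, ← dotProduct_sub]
  generalize R *ᵥ (Rᵀ *ᵥ x) = m at *
  have h4 : x - m = A *ᵥ m := by rw [h2]; simp
  rw [h4]
  conv_lhs => rw [h2]
  rw [add_dotProduct]

lemma decay (N : ℕ) (K : ℝ) (hK : 0 < K) (S F : ℝ) (hS : 0 ≤ S) (hF : S < K * F) :
    (1 + S) ^ ((N : ℝ) / 2) * Real.exp (-F) ≤ N.factorial * K ^ N * Real.exp (1 / K) := by
  have h1 : (1 + S) ^ ((N : ℝ) / 2) ≤ (1 + S) ^ N := by
    rw [← Real.rpow_natCast]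
    apply Real.rpow_le_rpow_of_exponent_le (by linarith)
    have : (0 : ℝ) ≤ N := Nat.cast_nonneg N
    linarith
  have h2 := Real.pow_div_factorial_le_exp ((1 + S) / K) (by positivity) N
  rw [div_pow, div_div, div_le_iff₀ (by positivity)] at h2
  have h3 : Real.exp ((1 + S) / K) ≤ Real.exp (1 / K) * Real.exp F := by
    rw [← Real.exp_add, Real.exp_le_exp, add_div]
    have : S / K ≤ F := by rw [div_le_iff₀ hK]; linarith
    linarith
  calc _ ≤ (Real.exp (1 / K) * Real.exp F * (K ^ N * N.factorial)) * Real.exp (-F) := by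
        gcongr
        exact h1.trans (h2.trans (by gcongr))
    _ = N.factorial * K ^ N * Real.exp (1 / K) * (Real.exp F * Real.exp (-F)) := by ring
    _ = _ := by rw [← Real.exp_add]; simp

/-- For a symmetric positive semidefinite `A ∈ ℝ^{d×d}` and
`u(y) = exp(−⟨y,Ay⟩)`, `WF(u) = (Ker A \ {0}) × {0}`. -/
theorem stmt_17 (d : ℕ) (A : Matrix (Fin d) (Fin d) ℝ) (hA : A.IsSymm)
    (hApos : A.PosSemidef) :
    gaborWF d (fun y => (Real.exp (-(∑ j, y j * A.mulVec y j)) : ℂ))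
      = {z : (Fin d → ℝ) × (Fin d → ℝ) | A.mulVec z.1 = 0 ∧ z.1 ≠ 0 ∧ z.2 = 0} := by
  have hB : (1 + A).PosDef := PosDef.one.add_posSemidef hApos
  obtain ⟨R, hR, hdet⟩ := exR (1 + A) hB
  have hnorm := stft_norm A R hR hdet
  set C : ℝ := |R.det| * ‖(Real.pi : ℂ) ^ ((d : ℂ) / 2)‖ with hC
  have hCpos : 0 < C := by
    have : (Real.pi : ℂ) ^ ((d : ℂ) / 2) ≠ 0 := by
      rw [Complex.cpow_def_of_ne_zero (by exact_mod_cast Real.pi_ne_zero)]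
      exact Complex.exp_ne_zero _
    positivity
  ext z
  obtain ⟨x, ξ⟩ := z
  simp only [gaborWF, Set.mem_setOf_eq, hnorm]
  constructor
  · rintro ⟨hz, hno⟩
    by_contra hcon
    apply hno
    have hdisj : A *ᵥ x ≠ 0 ∨ ξ ≠ 0 := by
      by_contra h
      push Not at h
      refine hcon ⟨h.1, ?_, h.2⟩
      rintro rfl
      exact hz (by rw [h.2]; rfl)
    have hnn : ∀ v : Fin d → ℝ, 0 ≤ v ⬝ᵥ v := fun v =>
      Finset.sum_nonneg fun i _ => mul_self_nonneg _
    let F : (Fin d → ℝ) × (Fin d → ℝ) → ℝ := fun w =>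
      w.1 ⬝ᵥ w.1 - (Rᵀ *ᵥ w.1) ⬝ᵥ (Rᵀ *ᵥ w.1) + (Rᵀ *ᵥ w.2) ⬝ᵥ (Rᵀ *ᵥ w.2) / 4
    let S : (Fin d → ℝ) × (Fin d → ℝ) → ℝ := fun w => (∑ j, w.1 j ^ 2) + (∑ j, w.2 j ^ 2)
    have hFc : Continuous F := by
      simp only [F]
      fun_prop
    have hSc : Continuous S := by
      simp only [S]
      fun_prop
    have hFh : ∀ (r : ℝ) w, F (r • w) = r ^ 2 * F w := by
      intro r w
      simp only [F, Prod.smul_fst, Prod.smul_snd, mulVec_smul, smul_dotProduct, dotProduct_smul,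
        smul_eq_mul]
      ring
    have hSh : ∀ (r : ℝ) w, S (r • w) = r ^ 2 * S w := by
      intro r w
      simp only [S, Prod.smul_fst, Prod.smul_snd, Pi.smul_apply, smul_eq_mul, mul_pow,
        ← Finset.mul_sum]
      ring
    have hSnn : ∀ w, 0 ≤ S w := fun w => by positivity
    have hFpos : 0 < F (x, ξ) := by
      obtain ⟨m, hm, hq⟩ := q_id A R hA hR x
      have hm1 : 0 ≤ m ⬝ᵥ (A *ᵥ m) := by simpa using hApos.dotProduct_mulVec_nonneg m
      have hm2 := hnn (A *ᵥ m)
      have hm3 := hnn (Rᵀ *ᵥ ξ)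
      simp only [F]
      rw [hq]
      rcases hdisj with h | h
      · have : 0 < (A *ᵥ m) ⬝ᵥ (A *ᵥ m) := by
          refine lt_of_le_of_ne hm2 fun h0 => h ?_
          have h0 := dotProduct_self_eq_zero.mp h0.symm
          rw [h0, add_zero] at hm
          rw [hm, h0]
        linarith
      · have : 0 < (Rᵀ *ᵥ ξ) ⬝ᵥ (Rᵀ *ᵥ ξ) := by
          refine lt_of_le_of_ne hm3 fun h0 => h ?_
          have h0 := dotProduct_self_eq_zero.mp h0.symm
          exact eq_zero_of_mulVec_eq_zero (by rwa [det_transpose]) h0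
        linarith
    let K : ℝ := (S (x, ξ) + 1) / F (x, ξ)
    have hK : 0 < K := div_pos (by linarith [hSnn (x, ξ)]) hFpos
    refine ⟨{w | S w < K * F w}, ⟨isOpen_lt hSc (continuous_const.mul hFc), ?_, ?_⟩, ?_, ?_⟩
    · simp [S, F]
    · intro w hw r hr
      simp only [Set.mem_setOf_eq] at hw ⊢
      rw [hFh, hSh]
      nlinarith [pow_pos hr 2]
    · simp only [Set.mem_setOf_eq, K]
      rw [div_mul_cancel₀ _ hFpos.ne']
      linarith
    · intro N
      refine ⟨C * (N.factorial * K ^ N * Real.exp (1 / K)), fun w hw => ?_⟩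
      have := decay N K hK (S w) (F w) (hSnn w) hw
      calc _ = C * ((1 + S w) ^ ((N : ℝ) / 2) * Real.exp (-F w)) := by
            simp only [S, F, add_assoc]; ring
        _ ≤ _ := by gcongr
  · rintro ⟨hAx, hx, rfl⟩
    refine ⟨fun h => hx (congrArg Prod.fst h), ?_⟩
    rintro ⟨Γ, ⟨-, -, hcone⟩, hmem, hdec⟩
    obtain ⟨M, hM⟩ := hdec 2
    have hxx : 0 < ∑ j, x j ^ 2 := by
      obtain ⟨i, hi⟩ := Function.ne_iff.mp hx
      exact Finset.sum_pos' (fun j _ => sq_nonneg _) ⟨i, Finset.mem_univ _, by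
        have : x i ≠ 0 := hi
        positivity⟩
    have hq0 : x ⬝ᵥ x - (Rᵀ *ᵥ x) ⬝ᵥ (Rᵀ *ᵥ x) = 0 := by
      obtain ⟨m, hm, hq⟩ := q_id A R hA hR x
      have h1 : A *ᵥ m + A *ᵥ (A *ᵥ m) = 0 := by rw [← mulVec_add, ← hm, hAx]
      have h2 : m ⬝ᵥ (A *ᵥ m) + (A *ᵥ m) ⬝ᵥ (A *ᵥ m) = 0 := by
        have h3 : m ⬝ᵥ (A *ᵥ (A *ᵥ m)) = (A *ᵥ m) ⬝ᵥ (A *ᵥ m) := by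
          rw [dotProduct_mulVec m A, ← mulVec_transpose, hA.eq]
        rw [← h3, ← dotProduct_add, h1, dotProduct_zero]
      rw [hq, h2]
    have hb : ∀ r : ℝ, 0 < r → (1 + r ^ 2 * ∑ j, x j ^ 2) * C ≤ M := by
      intro r hr
      have := hM _ (hcone _ hmem r hr)
      simp only [Prod.smul_mk, smul_zero, mulVec_smul, smul_dotProduct, dotProduct_smul,
        smul_eq_mul, mulVec_zero, dotProduct_zero, zero_div, add_zero, ← mul_sub, hq0, mul_zero,
        neg_zero, Real.exp_zero, mul_one, Pi.smul_apply, mul_pow, ← Finset.mul_sum,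
        Pi.zero_apply] at this
      simpa using this
    have hr1 := hb (1 + |M| / (C * ∑ j, x j ^ 2)) (by positivity)
    set T := ∑ j, x j ^ 2
    have hp : 0 ≤ |M| / (C * T) := by positivity
    have hp2 : |M| / (C * T) * (C * T) = |M| := div_mul_cancel₀ _ (by positivity)
    have : |M| < (1 + (1 + |M| / (C * T)) ^ 2 * T) * C := by
      have hCT : 0 < C * T := by positivity
      nlinarith [mul_nonneg (sq_nonneg (|M| / (C * T))) hCT.le]
    linarith [le_abs_self M]

end Stmt17
end

section
/- Let A ∈ ℂ^{d×d} be symmetric with Im A (a real symmetric matrix) positive semidefinite, and let u(y) = exp( i ⟨y, A y⟩ / 2 ) for y ∈ ℝ^d. Then the Gabor wave front set of u equals WF(u) = { (x, (Re A) x) : x ∈ Ker(Im A), x ≠ 0 } ⊆ ℝ^{2d} \ {0}, where Ker(Im A) = { x ∈ ℝ^d : (Im A) x = 0 }. -/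
open MeasureTheory Matrix

namespace Stmt18

/-- Gaussian-window short-time Fourier transform of `u : ℝ^d → ℂ`:
`Vu(x,ξ) = ∫ u(y) e^{−i⟨y,ξ⟩} e^{−|y−x|²} dy`. -/
noncomputable def STFT (d : ℕ) (u : (Fin d → ℝ) → ℂ) (x ξ : Fin d → ℝ) : ℂ :=
  ∫ y : Fin d → ℝ, u y * Complex.exp (-(Complex.I) * ((∑ j, y j * ξ j : ℝ) : ℂ))
    * Complex.exp (-((∑ j, (y j - x j) ^ 2 : ℝ) : ℂ))

/-- An open cone in `ℝ^{2d} \ {0}`. -/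
def IsOpenCone (d : ℕ) (Γ : Set ((Fin d → ℝ) × (Fin d → ℝ))) : Prop :=
  IsOpen Γ ∧ (0 : (Fin d → ℝ) × (Fin d → ℝ)) ∉ Γ ∧ ∀ z ∈ Γ, ∀ r : ℝ, 0 < r → r • z ∈ Γ

/-- The Gabor wave front set of `u : ℝ^d → ℂ`: the set of `z₀ ∈ ℝ^{2d} \ {0}` such that
there is no open cone containing `z₀` on which `Vu` decays faster than any power of
`(1+|z|²)^{1/2}`, where `|z|` is the Euclidean norm. -/
def gaborWF (d : ℕ) (u : (Fin d → ℝ) → ℂ) : Set ((Fin d → ℝ) × (Fin d → ℝ)) :=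
  {z | z ≠ 0 ∧ ¬ ∃ Γ : Set ((Fin d → ℝ) × (Fin d → ℝ)), IsOpenCone d Γ ∧ z ∈ Γ ∧
    ∀ N : ℕ, ∃ M : ℝ, ∀ w ∈ Γ,
      (1 + (∑ j, w.1 j ^ 2) + (∑ j, w.2 j ^ 2)) ^ ((N : ℝ) / 2)
        * ‖STFT d u w.1 w.2‖ ≤ M}

lemma orth_diag {d : ℕ} (R : Matrix (Fin d) (Fin d) ℝ) (hR : R.IsHermitian) :
    ∃ W : Matrix (Fin d) (Fin d) ℝ, Wᵀ * W = 1 ∧ Wᵀ * R * W = diagonal hR.eigenvalues := by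
  refine ⟨hR.eigenvectorUnitary, ?_, ?_⟩
  · have := Unitary.coe_star_mul_self hR.eigenvectorUnitary
    rwa [star_eq_conjTranspose, conjTranspose_eq_transpose_of_trivial] at this
  · have := hR.conjStarAlgAut_star_eigenvectorUnitary
    rw [Unitary.conjStarAlgAut_star_apply, star_eq_conjTranspose,
      conjTranspose_eq_transpose_of_trivial] at this
    exact this

lemma sim_diag {d : ℕ} (T R : Matrix (Fin d) (Fin d) ℝ) (hT : T.PosDef) (hR : R.IsSymm) :
    ∃ (P : Matrix (Fin d) (Fin d) ℝ) (r : Fin d → ℝ), P.det ≠ 0 ∧ Pᵀ * T * P = 1 ∧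
      Pᵀ * R * P = diagonal r := by
  obtain ⟨U, hU, hUT⟩ := orth_diag T hT.1
  have hpos := hT.eigenvalues_pos
  set e := hT.1.eigenvalues
  set D : Matrix (Fin d) (Fin d) ℝ := diagonal (fun i => (Real.sqrt (e i))⁻¹) with hD
  set P1 := U * D with hP1
  have hDt : Dᵀ = D := by simp [hD]
  have h1 : P1ᵀ * T * P1 = 1 := by
    have : P1ᵀ * T * P1 = D * (Uᵀ * T * U) * D := by
      rw [hP1, transpose_mul, hDt]; simp only [Matrix.mul_assoc]
    rw [this, hUT, hD, diagonal_mul_diagonal, diagonal_mul_diagonal, ← diagonal_one]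
    congr 1; ext i
    have h := Real.sqrt_pos.2 (hpos i)
    have h2 := Real.mul_self_sqrt (hpos i).le
    field_simp
    nlinarith
  have hR1 : (P1ᵀ * R * P1).IsHermitian := by
    rw [IsHermitian, conjTranspose_eq_transpose_of_trivial]
    simp only [transpose_mul, transpose_transpose, hR.eq, Matrix.mul_assoc]
  obtain ⟨W, hW, hWR⟩ := orth_diag _ hR1
  have h2 : (P1 * W)ᵀ * T * (P1 * W) = 1 := by
    have : (P1 * W)ᵀ * T * (P1 * W) = Wᵀ * (P1ᵀ * T * P1) * W := by
      rw [transpose_mul]; simp only [Matrix.mul_assoc]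
    rw [this, h1, Matrix.mul_one, hW]
  refine ⟨P1 * W, hR1.eigenvalues, ?_, h2, ?_⟩
  · intro h0
    have := congrArg det h2
    rw [det_mul, h0] at this
    simp at this
  · rw [← hWR, transpose_mul]; simp only [Matrix.mul_assoc]

lemma gauss {d : ℕ} (T R : Matrix (Fin d) (Fin d) ℝ) (hT : T.PosDef) (hR : R.IsSymm) :
    ∃ (M : Matrix (Fin d) (Fin d) ℂ) (C : ℝ), 0 < C ∧
      (T.map Complex.ofReal - Complex.I • R.map Complex.ofReal) * M = 1 ∧
      ∀ ζ : Fin d → ℂ, ‖∫ t : Fin d → ℝ, Complex.exp (-(1/2) * ((fun i => (t i : ℂ)) ⬝ᵥ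
        ((T.map Complex.ofReal - Complex.I • R.map Complex.ofReal) *ᵥ (fun i => (t i : ℂ))))
        + Complex.I * ((fun i => (t i : ℂ)) ⬝ᵥ ζ))‖ = C * Real.exp (-(1/2) * (ζ ⬝ᵥ M *ᵥ ζ).re) := by
  obtain ⟨P, r, hP, hPT, hPR⟩ := sim_diag T R hT hR
  set B := T.map Complex.ofReal - Complex.I • R.map Complex.ofReal with hB
  set Pc := P.map Complex.ofReal with hPc
  set β : Fin d → ℂ := fun i => 1 - Complex.I * r i with hβ
  have hβre : ∀ i, (β i).re = 1 := by intro i; simp [hβ]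
  have hβ0 : ∀ i, β i ≠ 0 := by
    intro i h; have := hβre i; rw [h] at this; simp at this
  have hmm : ∀ X Y : Matrix (Fin d) (Fin d) ℝ, (X * Y).map Complex.ofReal =
      X.map Complex.ofReal * Y.map Complex.ofReal := by
    intro X Y; exact Matrix.map_mul (f := Complex.ofRealHom)
  have hPB : Pcᵀ * B * Pc = diagonal β := by
    have e1 : Pcᵀ * T.map Complex.ofReal * Pc = 1 := by
      have := congrArg (fun X => X.map Complex.ofReal) hPT
      simp only [hmm] at this
      rw [transpose_map] at this
      rw [this]; ext i j; simp [Matrix.one_apply]; split_ifs <;> simp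
    have e2 : Pcᵀ * R.map Complex.ofReal * Pc = diagonal (fun i => (r i : ℂ)) := by
      have := congrArg (fun X => X.map Complex.ofReal) hPR
      simp only [hmm] at this
      rw [transpose_map] at this
      rw [this]; ext i j; simp [Matrix.diagonal_apply]; split_ifs <;> simp
    rw [hB, Matrix.mul_sub, Matrix.sub_mul, Matrix.mul_smul, Matrix.smul_mul, e1, e2]
    ext i j
    by_cases h : i = j
    · subst h; simp [hβ]
    · simp [h]
  have hdet : Pc.det ≠ 0 := by
    have : Pc.det = (P.det : ℂ) := by
      exact (RingHom.map_det Complex.ofRealHom P).symm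
    rw [this]; exact_mod_cast hP
  set Dc : Matrix (Fin d) (Fin d) ℂ := diagonal (fun i => (β i)⁻¹) with hDc
  have hBM : B * (Pc * Dc * Pcᵀ) = 1 := by
    have h1 : diagonal β * Dc = 1 := by
      rw [hDc, diagonal_mul_diagonal, ← diagonal_one]; congr 1; ext i; exact mul_inv_cancel₀ (hβ0 i)
    have h2 : Pcᵀ * (B * Pc * Dc) = 1 := by
      rw [← h1, ← hPB]; simp only [Matrix.mul_assoc]
    have h3 := mul_eq_one_comm.1 h2
    rw [← h3]; simp only [Matrix.mul_assoc]
  set K : ℂ := ∏ i, ((Real.pi : ℂ) / (β i / 2)) ^ (1 / 2 : ℂ) with hK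
  have hK0 : K ≠ 0 := by
    rw [hK, Finset.prod_ne_zero_iff]
    intro i _
    rw [Complex.cpow_ne_zero_iff]
    left
    have : (Real.pi : ℂ) ≠ 0 := by exact_mod_cast Real.pi_ne_zero
    exact div_ne_zero this (div_ne_zero (hβ0 i) two_ne_zero)
  refine ⟨Pc * Dc * Pcᵀ, |P.det| * ‖K‖, by positivity, hBM, ?_⟩
  intro ζ
  set F : (Fin d → ℝ) → ℂ := fun t => Complex.exp (-(1/2) * ((fun i => (t i : ℂ)) ⬝ᵥ
        (B *ᵥ (fun i => (t i : ℂ)))) + Complex.I * ((fun i => (t i : ℂ)) ⬝ᵥ ζ)) with hF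
  have hcv : ∫ t, F t = |P.det| • ∫ s, F (P *ᵥ s) := by
    have hm := Real.map_matrix_volume_pi_eq_smul_volume_pi hP
    have hFc : Continuous F := by
      rw [hF]
      unfold dotProduct mulVec dotProduct
      fun_prop
    have : ∫ s, F (P *ᵥ s) = ∫ t, F t ∂(Measure.map (toLin' P) volume) := by
      rw [integral_map]
      · rfl
      · exact (LinearMap.continuous_of_finiteDimensional _).aemeasurable
      · exact hFc.aestronglyMeasurable
    rw [this, hm, integral_smul_measure, ENNReal.toReal_ofReal (abs_nonneg _), smul_smul,
      abs_inv, mul_inv_cancel₀ (abs_ne_zero.2 hP), one_smul]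
  set c := Pcᵀ *ᵥ ζ with hc
  have hFP : ∀ s, F (P *ᵥ s) = Complex.exp (-∑ i, (β i / 2) * (s i : ℂ) ^ 2
      + ∑ i, (Complex.I * c i) * s i) := by
    intro s
    have hs : (fun i => ((P *ᵥ s) i : ℂ)) = Pc *ᵥ (fun i => (s i : ℂ)) := by
      ext i; simp [mulVec, dotProduct, hPc]
    simp only [hF]
    rw [hs]
    set sc : Fin d → ℂ := fun i => (s i : ℂ)
    have q1 : (Pc *ᵥ sc) ⬝ᵥ (B *ᵥ (Pc *ᵥ sc)) = sc ⬝ᵥ (diagonal β *ᵥ sc) := by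
      rw [← hPB, dotProduct_comm, dotProduct_mulVec, dotProduct_comm, ← mulVec_transpose]
      simp only [mulVec_mulVec, Matrix.mul_assoc]
    have q2 : (Pc *ᵥ sc) ⬝ᵥ ζ = sc ⬝ᵥ c := by
      rw [hc, dotProduct_comm, dotProduct_mulVec, dotProduct_comm, ← mulVec_transpose]
    rw [q1, q2]
    congr 1
    simp only [dotProduct, mulVec_diagonal, Finset.mul_sum, ← Finset.sum_neg_distrib]
    congr 1 <;> refine Finset.sum_congr rfl fun i _ => ?_ <;> simp only [sc] <;> ring
  rw [hcv]
  simp_rw [hFP]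
  rw [GaussianFourier.integral_cexp_neg_sum_mul_add (by intro i; simp [hβre]),
    Finset.prod_mul_distrib, ← hK, ← Complex.exp_sum, norm_smul, norm_mul, Complex.norm_exp,
    Real.norm_eq_abs, abs_abs, mul_assoc]
  congr 3
  have : ζ ⬝ᵥ (Pc * Dc * Pcᵀ) *ᵥ ζ = ∑ i, c i ^2 / β i := by
    rw [Matrix.mul_assoc, ← mulVec_mulVec, dotProduct_mulVec, ← mulVec_transpose,
      ← mulVec_mulVec, ← hc]
    simp only [dotProduct, hDc, mulVec_diagonal]
    refine Finset.sum_congr rfl fun i _ => ?_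
    field_simp
  rw [this]
  have h2 : ∑ i, (Complex.I * c i)^2 / (4 * (β i / 2)) = ((-(1/2) : ℝ) : ℂ) * ∑ i, c i ^2 / β i := by
    rw [Finset.mul_sum]
    refine Finset.sum_congr rfl fun i _ => ?_
    have := hβ0 i
    rw [mul_pow, Complex.I_sq]
    push_cast
    field_simp
    norm_num
  rw [h2, Complex.re_ofReal_mul]

lemma stft_norm (d : ℕ) (A : Matrix (Fin d) (Fin d) ℂ) (hA : A.IsSymm) (x ξ : Fin d → ℝ) :
    ‖STFT d (fun y => Complex.exp (Complex.I *
        (∑ j, (y j : ℂ) * A.mulVec (fun j' => (y j' : ℂ)) j) / 2)) x ξ‖ =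
    Real.exp (-(1/2) * (x ⬝ᵥ (A.map Complex.im) *ᵥ x)) *
    ‖∫ t : Fin d → ℝ, Complex.exp (-(1/2) * ((fun i => (t i : ℂ)) ⬝ᵥ
        ((((2:ℝ) • (1 : Matrix (Fin d) (Fin d) ℝ) + A.map Complex.im).map Complex.ofReal
          - Complex.I • (A.map Complex.re).map Complex.ofReal) *ᵥ (fun i => (t i : ℂ))))
        + Complex.I * ((fun i => (t i : ℂ)) ⬝ᵥ (fun i =>
          (((((A.map Complex.re) *ᵥ x) i - ξ i : ℝ)) : ℂ) +
            Complex.I * (((A.map Complex.im) *ᵥ x) i : ℝ))))‖ := by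
  have hB : (((2:ℝ) • (1 : Matrix (Fin d) (Fin d) ℝ) + A.map Complex.im).map Complex.ofReal
          - Complex.I • (A.map Complex.re).map Complex.ofReal) = (2:ℂ) • 1 - Complex.I • A := by
    ext i j
    have h1 := Complex.re_add_im (A i j)
    have h2 : (((1 : Matrix (Fin d) (Fin d) ℝ) i j : ℝ) : ℂ) = (1 : Matrix (Fin d) (Fin d) ℂ) i j := by
      simp [Matrix.one_apply]; split_ifs <;> simp
    simp only [Matrix.sub_apply, Matrix.smul_apply, Matrix.map_apply, Matrix.add_apply, smul_eq_mul, Complex.ofReal_add,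
      Complex.ofReal_mul, h2]
    conv_rhs => rw [← h1]
    push_cast
    linear_combination ((A i j).im : ℂ) * Complex.I_sq
  set xc : Fin d → ℂ := fun i => (x i : ℂ) with hxc
  set ξc : Fin d → ℂ := fun i => (ξ i : ℂ) with hξc
  have hζ : (fun i => (((((A.map Complex.re) *ᵥ x) i - ξ i : ℝ)) : ℂ) +
            Complex.I * (((A.map Complex.im) *ᵥ x) i : ℝ)) = A *ᵥ xc - ξc := by
    ext i
    have : ∀ j, A i j = (A i j).re + (A i j).im * Complex.I := fun j => (Complex.re_add_im _).symm
    simp only [mulVec, dotProduct, Pi.sub_apply, map_apply, hxc, hξc]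
    conv_rhs => 
      enter [1, 2, j]
      rw [this j]
    push_cast
    simp only [add_mul, Finset.sum_add_distrib, Finset.mul_sum]
    have : ∀ a b c e : ℂ, b = e → a - c + b = a + e - c := by intros; subst_vars; ring
    apply this
    exact Finset.sum_congr rfl fun j _ => by ring
  rw [hB, hζ, STFT, ← integral_add_right_eq_self _ x]
  have key : ∀ t : Fin d → ℝ, (Complex.exp (Complex.I *
        (∑ j, ((t + x) j : ℂ) * A.mulVec (fun j' => ((t + x) j' : ℂ)) j) / 2)) *
        Complex.exp (-(Complex.I) * ((∑ j, (t + x) j * ξ j : ℝ) : ℂ))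
    * Complex.exp (-((∑ j, ((t+x) j - x j) ^ 2 : ℝ) : ℂ)) =
      Complex.exp (Complex.I / 2 * (xc ⬝ᵥ A *ᵥ xc) - Complex.I * (xc ⬝ᵥ ξc)) *
      Complex.exp (-(1/2) * ((fun i => (t i : ℂ)) ⬝ᵥ
        (((2:ℂ) • 1 - Complex.I • A) *ᵥ (fun i => (t i : ℂ))))
        + Complex.I * ((fun i => (t i : ℂ)) ⬝ᵥ (A *ᵥ xc - ξc))) := by
    intro t
    set tc : Fin d → ℂ := fun i => (t i : ℂ) with htc
    have e0 : (fun j' => ((t + x) j' : ℂ)) = tc + xc := by ext j; simp [htc, hxc]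
    have e1 : (∑ j, ((t + x) j : ℂ) * A.mulVec (fun j' => ((t + x) j' : ℂ)) j) =
      (tc + xc) ⬝ᵥ A *ᵥ (tc + xc) := by rw [← e0]; rfl
    have e2 : ((∑ j, (t + x) j * ξ j : ℝ) : ℂ) = (tc + xc) ⬝ᵥ ξc := by
      rw [← e0]; simp [dotProduct, hξc]
    have e3 : ((∑ j, ((t+x) j - x j) ^ 2 : ℝ) : ℂ) = tc ⬝ᵥ tc := by
      simp [dotProduct, htc, sq]
    have e4 : xc ⬝ᵥ A *ᵥ tc = tc ⬝ᵥ A *ᵥ xc := by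
      rw [dotProduct_mulVec, ← mulVec_transpose, hA.eq, dotProduct_comm]
    rw [e1, e2, e3, ← Complex.exp_add, ← Complex.exp_add, ← Complex.exp_add]
    congr 1
    simp only [mulVec_add, dotProduct_add, add_dotProduct, sub_mulVec, smul_mulVec, one_mulVec,
      dotProduct_sub, dotProduct_smul, smul_eq_mul, e4]
    ring
  simp_rw [key]
  rw [integral_const_mul, norm_mul, Complex.norm_exp]
  congr 2
  have h1 : (xc ⬝ᵥ ξc).im = 0 := by simp [dotProduct, hxc, hξc]
  have h2 : (xc ⬝ᵥ A *ᵥ xc).im = x ⬝ᵥ (A.map Complex.im) *ᵥ x := by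
    simp [dotProduct, mulVec, hxc]
  have : Complex.I / 2 * (xc ⬝ᵥ A *ᵥ xc) - Complex.I * (xc ⬝ᵥ ξc)
    = Complex.I * (((1/2:ℝ):ℂ) * (xc ⬝ᵥ A *ᵥ xc) - xc ⬝ᵥ ξc) := by push_cast; ring
  rw [this, Complex.I_mul_re, Complex.sub_im, Complex.im_ofReal_mul, h1, h2]
  ring

lemma Q_alg {d : ℕ} (S R : Matrix (Fin d) (Fin d) ℝ) (hS : S.PosSemidef) (hR : R.IsSymm)
    (M : Matrix (Fin d) (Fin d) ℂ)
    (hM : (((2:ℝ) • (1 : Matrix (Fin d) (Fin d) ℝ) + S).map Complex.ofReal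
          - Complex.I • R.map Complex.ofReal) * M = 1) (x η : Fin d → ℝ) (ζ : Fin d → ℂ)
    (hζ : ζ = fun i => (η i : ℂ) + Complex.I * ((S *ᵥ x) i : ℝ))
    (h : (x ⬝ᵥ S *ᵥ x) + (ζ ⬝ᵥ M *ᵥ ζ).re ≤ 0) : S *ᵥ x = 0 ∧ η = 0 := by
  set v := M *ᵥ ζ with hv
  have hBv : (((2:ℝ) • (1 : Matrix (Fin d) (Fin d) ℝ) + S).map Complex.ofReal
          - Complex.I • R.map Complex.ofReal) *ᵥ v = ζ := by
    rw [hv, mulVec_mulVec, hM, one_mulVec]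
  set a : Fin d → ℝ := fun i => (v i).re with ha
  set b : Fin d → ℝ := fun i => (v i).im with hb
  set T := ((2:ℝ) • (1 : Matrix (Fin d) (Fin d) ℝ) + S) with hT
  have E1 : T *ᵥ a + R *ᵥ b = η := by
    ext i
    have := congrArg Complex.re (congrFun hBv i)
    rw [hζ] at this
    simp [mulVec, dotProduct, sub_mul, mul_assoc] at this
    simp [mulVec, dotProduct, ha, hb, ← this]
  have E2 : T *ᵥ b - R *ᵥ a = S *ᵥ x := by
    ext i
    have := congrArg Complex.im (congrFun hBv i)
    rw [hζ] at this
    simp [mulVec, dotProduct, sub_mul, mul_assoc] at this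
    simp [mulVec, dotProduct, ha, hb, ← this]
  have E3 : (ζ ⬝ᵥ v).re = η ⬝ᵥ a - (S *ᵥ x) ⬝ᵥ b := by
    rw [hζ]
    simp [dotProduct, ha, hb]
  have hSs : Sᵀ = S := by
    have := hS.1.eq; rwa [conjTranspose_eq_transpose_of_trivial] at this
  have sS : ∀ p q : Fin d → ℝ, p ⬝ᵥ S *ᵥ q = q ⬝ᵥ S *ᵥ p := by
    intro p q
    rw [dotProduct_mulVec, ← mulVec_transpose, hSs, dotProduct_comm]
  have sR : ∀ p q : Fin d → ℝ, p ⬝ᵥ R *ᵥ q = q ⬝ᵥ R *ᵥ p := by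
    intro p q
    rw [dotProduct_mulVec, ← mulVec_transpose, hR.eq, dotProduct_comm]
  have F1 : a ⬝ᵥ η = 2 * (a ⬝ᵥ a) + a ⬝ᵥ S *ᵥ a + a ⬝ᵥ R *ᵥ b := by
    rw [← E1, hT]; simp [add_mulVec, smul_mulVec]
  have F2 : b ⬝ᵥ S *ᵥ x = 2 * (b ⬝ᵥ b) + b ⬝ᵥ S *ᵥ b - b ⬝ᵥ R *ᵥ a := by
    rw [← E2, hT]; simp [add_mulVec, smul_mulVec]
  have pS : ∀ p : Fin d → ℝ, 0 ≤ p ⬝ᵥ S *ᵥ p := by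
    intro p; simpa using hS.dotProduct_mulVec_nonneg p
  have p1 := pS (x - b)
  have p2 := pS a
  have e1 : (x - b) ⬝ᵥ S *ᵥ (x - b) = x ⬝ᵥ S *ᵥ x - 2 * (b ⬝ᵥ S *ᵥ x) + b ⬝ᵥ S *ᵥ b := by
    simp only [mulVec_sub, dotProduct_sub, sub_dotProduct, sS x b]; ring
  have na : 0 ≤ a ⬝ᵥ a := by simpa using dotProduct_star_self_nonneg a
  have nb : 0 ≤ b ⬝ᵥ b := by simpa using dotProduct_star_self_nonneg b
  rw [E3, dotProduct_comm η, dotProduct_comm (S *ᵥ x)] at h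
  have hR' := sR a b
  have ha0 : a = 0 := dotProduct_self_eq_zero.1 (by linarith)
  have hb0 : b = 0 := dotProduct_self_eq_zero.1 (by linarith)
  rw [ha0, hb0] at E1 E2
  simp at E1 E2
  exact ⟨E2.symm, E1.symm⟩

/-- For a symmetric `A ∈ ℂ^{d×d}` with `Im A` positive semidefinite and
`u(y) = exp(i⟨y, Ay⟩/2)`, `WF(u) = { (x, (Re A)x) : x ∈ Ker(Im A), x ≠ 0 }`. -/
theorem stmt_18 (d : ℕ) (A : Matrix (Fin d) (Fin d) ℂ) (hA : A.IsSymm)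
    (hImA : (A.map Complex.im).PosSemidef) :
    gaborWF d (fun y => Complex.exp (Complex.I *
        (∑ j, (y j : ℂ) * A.mulVec (fun j' => (y j' : ℂ)) j) / 2))
      = {z : (Fin d → ℝ) × (Fin d → ℝ) | (A.map Complex.im).mulVec z.1 = 0 ∧
          z.1 ≠ 0 ∧ z.2 = (A.map Complex.re).mulVec z.1} := by
  set S := A.map Complex.im with hSdef
  set R := A.map Complex.re with hRdef
  have hR : R.IsSymm := by
    ext i j
    simp only [hRdef, transpose_apply, map_apply]
    rw [hA.apply i j]
  have hT : ((2:ℝ) • (1 : Matrix (Fin d) (Fin d) ℝ) + S).PosDef :=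
    (PosDef.one.smul (by norm_num : (0:ℝ) < 2)).add_posSemidef hImA
  obtain ⟨M, C, hC, hM, hG⟩ := gauss _ R hT hR
  set ζ : (Fin d → ℝ) × (Fin d → ℝ) → Fin d → ℂ := fun w i =>
    (((R *ᵥ w.1) i - w.2 i : ℝ) : ℂ) + Complex.I * ((S *ᵥ w.1) i : ℝ) with hζ
  set Q : (Fin d → ℝ) × (Fin d → ℝ) → ℝ := fun w =>
    1/2 * (w.1 ⬝ᵥ S *ᵥ w.1 + (ζ w ⬝ᵥ M *ᵥ ζ w).re) with hQ
  set u : (Fin d → ℝ) → ℂ := (fun y => Complex.exp (Complex.I *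
        (∑ j, (y j : ℂ) * A.mulVec (fun j' => (y j' : ℂ)) j) / 2)) with hu
  have hV : ∀ w : (Fin d → ℝ) × (Fin d → ℝ), ‖STFT d u w.1 w.2‖ = C * Real.exp (-Q w) := by
    intro w
    rw [hu, stft_norm d A hA w.1 w.2, ← hSdef, ← hRdef]
    rw [hG (ζ w), mul_left_comm, ← Real.exp_add]
    simp only [hQ]
    congr 2
    ring
  have hQc : Continuous Q := by
    simp only [hQ, hζ, dotProduct, mulVec]
    fun_prop
  have hζs : ∀ (r : ℝ) w, ζ (r • w) = (r : ℂ) • ζ w := by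
    intro r w
    ext i
    simp only [hζ, Prod.smul_fst, Prod.smul_snd, mulVec_smul, Pi.smul_apply, smul_eq_mul]
    push_cast
    ring
  have hQs : ∀ (r : ℝ) w, Q (r • w) = r ^ 2 * Q w := by
    intro r w
    simp only [hQ, hζs, Prod.smul_fst, mulVec_smul, dotProduct_smul, smul_dotProduct, smul_eq_mul,
      Complex.re_ofReal_mul]
    ring
  have hn : ∀ w : (Fin d → ℝ) × (Fin d → ℝ), w ≠ 0 → 0 < (∑ j, w.1 j ^ 2) + (∑ j, w.2 j ^ 2) := by
    intro w hw
    have h1 : 0 ≤ ∑ j, w.1 j ^ 2 := Finset.sum_nonneg fun j _ => sq_nonneg _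
    have h2 : 0 ≤ ∑ j, w.2 j ^ 2 := Finset.sum_nonneg fun j _ => sq_nonneg _
    rcases (add_nonneg h1 h2).lt_or_eq with h | h
    · exact h
    · exfalso
      apply hw
      have a1 : ∑ j, w.1 j ^ 2 = 0 := by linarith
      have a2 : ∑ j, w.2 j ^ 2 = 0 := by linarith
      rw [Finset.sum_eq_zero_iff_of_nonneg (fun j _ => sq_nonneg _)] at a1 a2
      ext j
      · simpa using a1 j (Finset.mem_univ j)
      · simpa using a2 j (Finset.mem_univ j)
  have hns : ∀ (r : ℝ) (w : (Fin d → ℝ) × (Fin d → ℝ)),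
      (∑ j, (r • w).1 j ^ 2) + (∑ j, (r • w).2 j ^ 2) =
        r ^ 2 * ((∑ j, w.1 j ^ 2) + (∑ j, w.2 j ^ 2)) := by
    intro r w
    simp only [Prod.smul_fst, Prod.smul_snd, Pi.smul_apply, smul_eq_mul, mul_pow,
      ← Finset.mul_sum, mul_add]
  ext z
  constructor
  · rintro ⟨hz, hΓ⟩
    have hQ0 : Q z ≤ 0 := by
      by_contra! hpos
      apply hΓ
      have hz' := hn z hz
      obtain ⟨δ, hδ, hδz⟩ : ∃ δ : ℝ, 0 < δ ∧
          δ * ((∑ j, z.1 j ^ 2) + (∑ j, z.2 j ^ 2)) < Q z := by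
        refine ⟨Q z / (2 * ((∑ j, z.1 j ^ 2) + (∑ j, z.2 j ^ 2))), by positivity, ?_⟩
        have : Q z / (2 * ((∑ j, z.1 j ^ 2) + (∑ j, z.2 j ^ 2))) *
          ((∑ j, z.1 j ^ 2) + (∑ j, z.2 j ^ 2)) = Q z / 2 := by
          field_simp
        rw [this]; linarith
      refine ⟨{w | δ * ((∑ j, w.1 j ^ 2) + (∑ j, w.2 j ^ 2)) < Q w}, ⟨?_, ?_, ?_⟩, hδz, ?_⟩
      · exact isOpen_lt (by fun_prop) hQc
      · have := hQs 0 0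
        simp at this
        simp [this]
      · intro w hw r hr
        simp only [Set.mem_ofPred_eq] at hw ⊢
        rw [hns, hQs]
        nlinarith [mul_lt_mul_of_pos_left hw (pow_pos hr 2)]
      · intro N
        refine ⟨C * (Real.exp δ * (N.factorial / δ ^ N)), ?_⟩
        intro w hw
        simp only [Set.mem_ofPred_eq] at hw
        rw [hV, add_assoc]
        set s := (∑ j, w.1 j ^ 2) + (∑ j, w.2 j ^ 2) with hs
        have hs0 : 0 ≤ s := add_nonneg (Finset.sum_nonneg fun j _ => sq_nonneg _)
          (Finset.sum_nonneg fun j _ => sq_nonneg _)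
        have h1 : (1 + s) ^ ((N : ℝ) / 2) ≤ (1 + s) ^ N := by
          rw [← Real.rpow_natCast]
          apply Real.rpow_le_rpow_of_exponent_le (by linarith)
          have : (0:ℝ) ≤ N := N.cast_nonneg
          linarith
        have h2 : Real.exp (-Q w) ≤ Real.exp (-(δ * s)) := Real.exp_le_exp.2 (by linarith)
        have h3 := Real.pow_div_factorial_le_exp (x := δ * (1 + s)) (by positivity) N
        have h4 : (1 + s) ^ N ≤ Real.exp (δ * (1 + s)) * (N.factorial / δ ^ N) := by
          have hf : (0:ℝ) < N.factorial := by exact_mod_cast N.factorial_pos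
          rw [div_le_iff₀ hf, mul_pow] at h3
          rw [← mul_div_assoc, le_div_iff₀ (by positivity)]
          linarith
        calc (1 + s) ^ ((N : ℝ) / 2) * (C * Real.exp (-Q w))
            ≤ (Real.exp (δ * (1 + s)) * (N.factorial / δ ^ N)) * (C * Real.exp (-(δ * s))) := by
              gcongr
              exact h1.trans h4
          _ = C * ((Real.exp (δ * (1 + s)) * Real.exp (-(δ * s))) * (N.factorial / δ ^ N)) := by ring
          _ = C * (Real.exp δ * (N.factorial / δ ^ N)) := by
              rw [← Real.exp_add]; congr 4; ring
    have hle : z.1 ⬝ᵥ S *ᵥ z.1 + (ζ z ⬝ᵥ M *ᵥ ζ z).re ≤ 0 := by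
      simp only [hQ] at hQ0
      linarith
    obtain ⟨h1, h2⟩ := Q_alg S R hImA hR M hM z.1 (R *ᵥ z.1 - z.2) (ζ z) rfl hle
    have h3 : z.2 = R *ᵥ z.1 := (sub_eq_zero.1 h2).symm
    refine ⟨h1, ?_, h3⟩
    intro h0
    apply hz
    rw [h0, mulVec_zero] at h3
    exact Prod.ext h0 h3
  · rintro ⟨h1, h2, h3⟩
    have hz : z ≠ 0 := fun h => h2 (by rw [h]; rfl)
    refine ⟨hz, ?_⟩
    rintro ⟨Γ, ⟨-, -, hcone⟩, hzΓ, hdec⟩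
    obtain ⟨K, hK⟩ := hdec 2
    have hζ0 : ζ z = 0 := by
      ext i
      simp only [hζ]
      rw [h1, ← h3]
      simp
    have hQz : Q z = 0 := by
      simp only [hQ]
      rw [h1, hζ0]
      simp
    set n := (∑ j, z.1 j ^ 2) + (∑ j, z.2 j ^ 2) with hndef
    have hnz : 0 < n := hn z hz
    have hb : ∀ r : ℝ, 0 < r → (1 + r ^ 2 * n) * C ≤ K := by
      intro r hr
      have := hK _ (hcone z hzΓ r hr)
      rw [hV, hQs, hQz, add_assoc, hns] at this
      simpa using this
    have hK0 : 0 ≤ |K| := abs_nonneg K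
    have := hb (1 + |K| / (n * C)) (by positivity)
    have hx : 1 + |K| / (n * C) ≤ (1 + |K| / (n * C)) ^ 2 := by
      have : 0 ≤ |K| / (n * C) := by positivity
      nlinarith
    have hy : (1 + (1 + |K| / (n * C)) * n) * C ≤ K :=
      le_trans (by gcongr) this
    have : (1 + (1 + |K| / (n * C)) * n) * C = C + n * C + |K| := by
      field_simp
      ring
    have := le_abs_self K
    have := mul_pos hnz hC
    linarith

end Stmt18
end
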